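/- Let X, V, B, Y be finite nonempty sets, π : V → B a map (the Markov-blanket projection), p : X × V → ℝ a prior with nonnegative values summing to 1, ε > 0, and let d_V : (X×V)×(X×V) → ℝ and d_B : (X×B)×(X×B) → ℝ be nonnegative symmetric distance functions satisfying d_B((x,π(v)),(x',π(v'))) ≤ d_V((x,v),(x',v')) for all x,x',v,v'. Let q' : (X×B) → Y → ℝ be a reduced channel (nonnegative, with Σ_{y} q'((x,b),y) = 1 for each (x,b)) satisfying the reduced ε-metric-DP constraints q'((x,b),y) ≤ exp(ε·d_B((x,b),(x',b')))·q'((x',b'),y) for all (x,b), (x',b') and all y, and define the full channel q by the conditionally dependent (CD) policy q((x,v),y) := q'((x,π(v)),y). Then for all (x,v), (x',v') with p(x,v) > 0 and p(x',v') > 0 and every y with q((x,v),y) > 0 and q((x',v'),y) > 0, it holds that |ln(Pr[(X,V)=(x,v)|Y=y] / Pr[(X,V)=(x',v')|Y=y]) − ln(p(x,v)/p(x',v'))| ≤ ε·d_V((x,v),(x',v')), where Pr[(X,V)=(x,v)|Y=y] := p(x,v)·q((x,v),y)/Σ_{(t,u)} p(t,u)·q((t,u),y). (Proposition 2: enforcing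 the reduced mDP constraints under the CD policy suffices for the bounded context-aware posterior leakage.) -/

import Mathlib

/-!
Bayes' rule cancels the output probability, so the posterior odds of two secrets are their prior
odds times the likelihood ratio. The leakage is therefore the absolute log-likelihood ratio, which
the metric-DP constraint, used in both directions, bounds by `ε` times the distance of the secrets.
Under the CD policy the likelihoods are those of the reduced secrets, whose distance is dominated
by the full one.
-/

section CDPolicy

variable {S T Y : Type*}

/-- The probability of observing `y` when the secret has prior `p` and is sent through the channel
`q`. It takes the junk value `0` when the series diverges. -/
noncomputable def outputProb (p : S → ℝ) (q : S → Y → ℝ) (y : Y) : ℝ :=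
  ∑' t, p t * q t y

/-- The posterior probability of the secret `s` after observing `y`, given by Bayes' rule. -/
noncomputable def posterior (p : S → ℝ) (q : S → Y → ℝ) (y : Y) (s : S) : ℝ :=
  p s * q s y / outputProb p q y

/-- The posterior leakage at output `y`: how far observing `y` moves the log-odds of `s` against
`s'`. -/
noncomputable def posteriorLeakage (p : S → ℝ) (q : S → Y → ℝ) (y : Y) (s s' : S) : ℝ :=
  |Real.log (posterior p q y s / posterior p q y s') - Real.log (p s / p s')|

/-- The `ε`-metric-differential-privacy constraints on a channel `q`, for an arbitrary real-valued
function `d` in the role of the distance. -/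
def IsMetricDP (ε : ℝ) (d : S → S → ℝ) (q : S → Y → ℝ) : Prop :=
  ∀ s s' y, q s y ≤ Real.exp (ε * d s s') * q s' y

section Bayes

variable {p : S → ℝ} {q : S → Y → ℝ} {y : Y}

theorem outputProb_pos (hp : ∀ t, 0 ≤ p t) (hq : ∀ t, 0 ≤ q t y)
    (hsum : Summable fun t => p t * q t y) {s : S} (hps : 0 < p s) (hqs : 0 < q s y) :
    0 < outputProb p q y :=
  hsum.tsum_pos (fun t => mul_nonneg (hp t) (hq t)) s (mul_pos hps hqs)

theorem posterior_div_posterior (hy : outputProb p q y ≠ 0) (s s' : S) :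
    posterior p q y s / posterior p q y s' = p s / p s' * (q s y / q s' y) := by
  rw [posterior, posterior, div_div_div_cancel_right₀ hy, mul_div_mul_comm]

theorem posteriorLeakage_eq_abs_log_div (hy : outputProb p q y ≠ 0) {s s' : S}
    (hps : p s ≠ 0) (hps' : p s' ≠ 0) (hqs : q s y ≠ 0) (hqs' : q s' y ≠ 0) :
    posteriorLeakage p q y s s' = |Real.log (q s y / q s' y)| := by
  rw [posteriorLeakage, posterior_div_posterior hy,
    Real.log_mul (div_ne_zero hps hps') (div_ne_zero hqs hqs'), add_sub_cancel_left]

end Bayes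

namespace IsMetricDP

variable {ε : ℝ} {d : S → S → ℝ} {q : S → Y → ℝ} {y : Y} {s : S}

theorem comp {d' : T → T → ℝ} {q' : T → Y → ℝ} (h : IsMetricDP ε d' q') (ρ : S → T) :
    IsMetricDP ε (fun s s' => d' (ρ s) (ρ s')) (fun s => q' (ρ s)) :=
  fun s s' => h (ρ s) (ρ s')

theorem pos_of_pos (h : IsMetricDP ε d q) (hs : 0 < q s y) (s' : S) : 0 < q s' y :=
  pos_of_mul_pos_right (hs.trans_le (h s s' y)) (Real.exp_nonneg _)

theorem log_div_le (h : IsMetricDP ε d q) (hs : 0 < q s y) (s' : S) :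
    Real.log (q s y / q s' y) ≤ ε * d s s' := by
  have hs' : 0 < q s' y := h.pos_of_pos hs s'
  rw [Real.log_le_iff_le_exp (div_pos hs hs'), div_le_iff₀ hs']
  exact h s s' y

theorem abs_log_div_le (h : IsMetricDP ε d q) (hs : 0 < q s y) {s' : S} (hd : d s s' = d s' s) :
    |Real.log (q s y / q s' y)| ≤ ε * d s s' := by
  refine abs_le'.mpr ⟨h.log_div_le hs s', ?_⟩
  rw [← Real.log_inv, inv_div, hd]
  exact h.log_div_le (h.pos_of_pos hs s') s

theorem posteriorLeakage_le (h : IsMetricDP ε d q) {p : S → ℝ} (hp : ∀ t, 0 ≤ p t)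
    (hsum : Summable fun t => p t * q t y) {s' : S} (hd : d s s' = d s' s)
    (hps : 0 < p s) (hps' : 0 < p s') (hqs : 0 < q s y) :
    posteriorLeakage p q y s s' ≤ ε * d s s' := by
  have hq : ∀ t, 0 < q t y := h.pos_of_pos hqs
  have hy : 0 < outputProb p q y := outputProb_pos hp (fun t => (hq t).le) hsum hps hqs
  rw [posteriorLeakage_eq_abs_log_div hy.ne' hps.ne' hps'.ne' hqs.ne' (hq s').ne']
  exact h.abs_log_div_le hqs hd

end IsMetricDP

-- The CD policy on pairs of a record and its context is the case `ρ = Prod.map id π`.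
theorem cd_policy_reduced_mdp_implies_posterior_leakage_bound_general
    (ρ : S → T) {p : S → ℝ} (hp : ∀ s, 0 ≤ p s) {ε : ℝ} (hε : 0 ≤ ε)
    {d : S → S → ℝ} {d' : T → T → ℝ} (hd' : ∀ a b, d' a b = d' b a)
    (hdom : ∀ s s', d' (ρ s) (ρ s') ≤ d s s')
    {q' : T → Y → ℝ} (hmdp : IsMetricDP ε d' q')
    {s s' : S} (hps : 0 < p s) (hps' : 0 < p s') {y : Y} (hqs : 0 < q' (ρ s) y)
    (hsum : Summable fun t => p t * q' (ρ t) y) :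
    posteriorLeakage p (fun t => q' (ρ t)) y s s' ≤ ε * d s s' :=
  calc posteriorLeakage p (fun t => q' (ρ t)) y s s'
    _ ≤ ε * d' (ρ s) (ρ s') := (hmdp.comp ρ).posteriorLeakage_le hp hsum (hd' _ _) hps hps' hqs
    _ ≤ ε * d s s' := mul_le_mul_of_nonneg_left (hdom s s') hε

end CDPolicy

/-- Proposition 2 (PL guarantee of the CD policy): if the reduced channel `q'`
on `X × B` satisfies the reduced ε-metric-DP constraints with respect to a
nonnegative symmetric distance `d_B` dominated by the full context-aware
distance `d_V`, then the full channel `q` defined by the CD policy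
(`q((x,v),y) = q'((x,π v),y)`) achieves the bounded context-aware posterior
leakage on the full augmented secret domain `X × V`. -/
theorem cd_policy_reduced_mdp_implies_posterior_leakage_bound
    (X V B Y : Type*) [Fintype X] [Fintype V] [Fintype B] [Fintype Y]
    [Nonempty X] [Nonempty V] [Nonempty B] [Nonempty Y]
    (π : V → B)
    (p : X × V → ℝ) (hp : ∀ s, 0 ≤ p s) (hpsum : ∑ s, p s = 1)
    (ε : ℝ) (hε : 0 < ε)
    (dV : (X × V) × (X × V) → ℝ) (dB : (X × B) × (X × B) → ℝ)
    (hdV : ∀ a b, 0 ≤ dV (a, b)) (hdVsymm : ∀ a b, dV (a, b) = dV (b, a))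
    (hdB : ∀ a b, 0 ≤ dB (a, b)) (hdBsymm : ∀ a b, dB (a, b) = dB (b, a))
    (hdom : ∀ x x' v v', dB ((x, π v), (x', π v')) ≤ dV ((x, v), (x', v')))
    (q' : X × B → Y → ℝ) (hq' : ∀ s y, 0 ≤ q' s y)
    (hq'sum : ∀ s, ∑ y, q' s y = 1)
    (hmdp : ∀ s s' y, q' s y ≤ Real.exp (ε * dB (s, s')) * q' s' y)
    (q : X × V → Y → ℝ) (hqdef : ∀ x v y, q (x, v) y = q' (x, π v) y) :
    ∀ x v x' v', 0 < p (x, v) → 0 < p (x', v') →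
      ∀ y, 0 < q (x, v) y → 0 < q (x', v') y →
        |Real.log ((p (x, v) * q (x, v) y / ∑ t, p t * q t y) /
            (p (x', v') * q (x', v') y / ∑ t, p t * q t y)) -
          Real.log (p (x, v) / p (x', v'))| ≤ ε * dV ((x, v), (x', v')) := by
  intro x v x' v' hp₁ hp₂ y hq₁ _
  obtain rfl : q = fun s => q' (Prod.map id π s) := funext₂ fun s => hqdef s.1 s.2
  simpa only [posteriorLeakage, posterior, outputProb, tsum_fintype] using
    cd_policy_reduced_mdp_implies_posterior_leakage_bound_general (Prod.map id π) hp hε.le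
      (d := fun a b => dV (a, b)) (d' := fun a b => dB (a, b)) hdBsymm
      (fun a b => hdom a.1 b.1 a.2 b.2) hmdp hp₁ hp₂ hq₁ .of_finite
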